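/- (Type B_n, Weyl group computation.) For all integers r, j with 2 ≤ r < n and r−1 ≤ j ≤ n−1, one has w_{r,j}(ω_r) = ω_{r−2} + α_j; and for all 1 ≤ r < n, one has w_{r,n}(ω_r) = ω_{r−1} + α_n. -/

import Mathlib

/-- The simple reflection `s_i` of type `B_n` acting on coordinate vectors
(coordinates indexed `1, …, n`): for `i < n` it swaps the `i`-th and `(i+1)`-th
coordinates, and `s_n` changes the sign of the `n`-th coordinate. -/
def refB (n : ℕ) (i : ℤ) (x : ℤ → ℝ) : ℤ → ℝ :=
  if i ≤ (n : ℤ) - 1 then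
    fun t => if t = i then x (i + 1) else if t = i + 1 then x i else x t
  else
    fun t => if t = (n : ℤ) then -x (n : ℤ) else x t

/-- The fundamental weight `ω_r = ε_1 + ⋯ + ε_r` (with `ω_0 = 0`). -/
def omegaW (r : ℤ) : ℤ → ℝ := fun t => if 1 ≤ t ∧ t ≤ r then 1 else 0

/-- The simple root `α_j` of type `B_n`: `α_j = ε_j - ε_{j+1}` for `j < n`
and `α_n = ε_n`. -/
def alphaB (n : ℕ) (j : ℤ) : ℤ → ℝ := fun t =>
  if j ≤ (n : ℤ) - 1 then (if t = j then 1 else if t = j + 1 then -1 else 0)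
  else (if t = (n : ℤ) then 1 else 0)

/-- The list of indices of `w_{r,j} = s_{j-1} ⋯ s_{r-1} · s_{j+1} ⋯ s_{n-1} ·
s_n s_{n-1} ⋯ s_r` (rightmost factor applied first, so applied via `foldr`). -/
def wrjIdx (n : ℕ) (r j : ℤ) : List ℤ :=
  ((List.range (j + 1 - r).toNat).map fun t => j - 1 - (t : ℤ))
    ++ ((List.range ((n : ℤ) - 1 - j).toNat).map fun t => j + 1 + (t : ℤ))
    ++ ((List.range ((n : ℤ) + 1 - r).toNat).map fun t => (n : ℤ) - (t : ℤ))

/-- The list of indices of `w_{r,n} = s_{n-1} s_{n-2} ⋯ s_r` (rightmost factor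
applied first). -/
def wrnIdx (n : ℕ) (r : ℤ) : List ℤ :=
  (List.range ((n : ℤ) - r).toNat).map fun t => (n : ℤ) - 1 - (t : ℤ)

/-!
Everything is a computation with the standard basis `ε_i`. A descending word `s_{q-1} ⋯ s_p` in the
reflections `s_i`, `i < n`, carries `ε_p` to `ε_q`, an ascending word `s_p ⋯ s_{q-1}` carries `ε_q`
back to `ε_p`, and both fix every vector whose coordinates `p, …, q` are all equal.
Following `ω_r` through the three blocks of `w_{r,j}` gives
`ω_r = ω_{r-1} + ε_r ↦ ω_{r-1} - ε_n ↦ ω_{r-1} - ε_{j+1} = ω_{r-2} + ε_{r-1} - ε_{j+1}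
↦ ω_{r-2} + ε_j - ε_{j+1}`.
-/

/-- The standard basis vector `ε_p`. -/
def basisVec (p : ℤ) : ℤ → ℝ := Pi.single p 1

/-- The simple reflection `s_i` of type `B_n` as a linear endomorphism, so that words in the simple
reflections are products in `Module.End`. -/
def reflB (n : ℕ) (i : ℤ) : Module.End ℝ (ℤ → ℝ) where
  toFun := refB n i
  map_add' x y := by
    funext t
    simp only [refB, Pi.add_apply, ite_apply]
    grind
  map_smul' c x := by
    funext t
    simp only [refB, Pi.smul_apply, ite_apply, smul_eq_mul, RingHom.id_apply]
    grind

/-- The Weyl group element `s_{i_1} ⋯ s_{i_k}` attached to the word `[i_1, …, i_k]`. -/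
def wordB (n : ℕ) (l : List ℤ) : Module.End ℝ (ℤ → ℝ) := (l.map (reflB n)).prod

/-- The descending word `[q - 1, q - 2, …, p]`, empty if `q ≤ p`. Excluding the upper bound makes
`wordB n (descWord p q)` carry `ε_p` to `ε_q`. -/
def descWord (p q : ℤ) : List ℤ := (List.range (q - p).toNat).map fun t : ℕ => q - 1 - (t : ℤ)

/-- The ascending word `[p, p + 1, …, q - 1]`, empty if `q ≤ p`. Excluding the upper bound makes
`wordB n (ascWord p q)` carry `ε_q` to `ε_p`. -/
def ascWord (p q : ℤ) : List ℤ := (List.range (q - p).toNat).map fun t : ℕ => p + (t : ℤ)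

theorem omegaW_eq_add_basisVec {r : ℤ} (hr : 1 ≤ r) : omegaW r = omegaW (r - 1) + basisVec r := by
  funext t
  simp only [omegaW, basisVec, Pi.add_apply, Pi.single_apply]
  grind

theorem alphaB_of_lt {n : ℕ} {j : ℤ} (hj : j < n) :
    alphaB n j = basisVec j - basisVec (j + 1) := by
  funext t
  simp only [alphaB, basisVec, Pi.sub_apply, Pi.single_apply]
  grind

theorem alphaB_last (n : ℕ) : alphaB n n = basisVec n := by
  funext t
  simp only [alphaB, basisVec, Pi.single_apply]
  grind

section Reflections

variable {n : ℕ} {i : ℤ}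

theorem reflB_apply_of_lt (hi : i < n) (x : ℤ → ℝ) (t : ℤ) :
    reflB n i x t = if t = i then x (i + 1) else if t = i + 1 then x i else x t :=
  congrFun (if_pos (Int.le_sub_one_of_lt hi)) t

theorem reflB_last_apply (n : ℕ) (x : ℤ → ℝ) (t : ℤ) :
    reflB n n x t = if t = n then -x n else x t :=
  congrFun (if_neg (by lia)) t

theorem reflB_basisVec (hi : i < n) : reflB n i (basisVec i) = basisVec (i + 1) := by
  funext t
  simp only [reflB_apply_of_lt hi, basisVec, Pi.single_apply]
  grind

theorem reflB_basisVec_add_one (hi : i < n) : reflB n i (basisVec (i + 1)) = basisVec i := by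
  funext t
  simp only [reflB_apply_of_lt hi, basisVec, Pi.single_apply]
  grind

theorem reflB_last_basisVec (n : ℕ) : reflB n n (basisVec n) = -basisVec n := by
  funext t
  simp only [reflB_last_apply, basisVec, Pi.neg_apply, Pi.single_apply]
  grind

theorem reflB_eq_self {x : ℤ → ℝ} (hi : i < n) (hx : x i = x (i + 1)) : reflB n i x = x := by
  funext t
  rw [reflB_apply_of_lt hi]
  grind

theorem reflB_last_eq_self {x : ℤ → ℝ} (hx : x n = 0) : reflB n n x = x := by
  funext t
  rw [reflB_last_apply]
  grind

end Reflections

section Words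

variable {n : ℕ} {p q : ℤ}

theorem foldr_refB_eq_wordB (n : ℕ) (l : List ℤ) (x : ℤ → ℝ) :
    l.foldr (refB n) x = wordB n l x := by
  induction l with
  | nil => rfl
  | cons i l ih => exact congrArg (refB n i) ih

theorem wordB_cons (n : ℕ) (i : ℤ) (l : List ℤ) (x : ℤ → ℝ) :
    wordB n (i :: l) x = reflB n i (wordB n l x) :=
  rfl

theorem wordB_append (n : ℕ) (l₁ l₂ : List ℤ) (x : ℤ → ℝ) :
    wordB n (l₁ ++ l₂) x = wordB n l₁ (wordB n l₂ x) := by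
  simp only [wordB, List.map_append, List.prod_append, Module.End.mul_apply]

theorem wordB_eq_self {l : List ℤ} {x : ℤ → ℝ} (h : ∀ i ∈ l, i < n ∧ x i = x (i + 1)) :
    wordB n l x = x := by
  refine (MulAction.stabilizerSubmonoid (Module.End ℝ (ℤ → ℝ)) x).list_prod_mem fun s hs => ?_
  obtain ⟨i, hi, rfl⟩ := List.mem_map.mp hs
  exact reflB_eq_self (h i hi).1 (h i hi).2

theorem mem_descWord {i : ℤ} : i ∈ descWord p q ↔ p ≤ i ∧ i < q := by
  simp only [descWord, List.mem_map, List.mem_range]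
  exact ⟨by grind, fun h => ⟨(q - 1 - i).toNat, by lia, by lia⟩⟩

theorem mem_ascWord {i : ℤ} : i ∈ ascWord p q ↔ p ≤ i ∧ i < q := by
  simp only [ascWord, List.mem_map, List.mem_range]
  exact ⟨by grind, fun h => ⟨(i - p).toNat, by lia, by lia⟩⟩

theorem descWord_self (p : ℤ) : descWord p p = [] := by simp [descWord]

theorem ascWord_self (p : ℤ) : ascWord p p = [] := by simp [ascWord]

theorem descWord_add_one (h : p ≤ q) : descWord p (q + 1) = q :: descWord p q := by
  have hlen : (q + 1 - p).toNat = (q - p).toNat + 1 := by lia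
  rw [descWord, hlen, List.range_succ_eq_map, List.map_cons, List.map_map]
  refine congrArg₂ List.cons (by simp) (List.map_congr_left fun t _ => ?_)
  rw [Function.comp_apply, Nat.cast_succ]
  ring

theorem ascWord_sub_one (h : p ≤ q) : ascWord (p - 1) q = (p - 1) :: ascWord p q := by
  have hlen : (q - (p - 1)).toNat = (q - p).toNat + 1 := by lia
  rw [ascWord, hlen, List.range_succ_eq_map, List.map_cons, List.map_map]
  refine congrArg₂ List.cons (by simp) (List.map_congr_left fun t _ => ?_)
  rw [Function.comp_apply, Nat.cast_succ]
  ring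

theorem wordB_descWord_basisVec (hpq : p ≤ q) (hq : q ≤ n) :
    wordB n (descWord p q) (basisVec p) = basisVec q := by
  induction q, hpq using Int.leInduction with
  | base => rw [descWord_self]; rfl
  | succ q hpq ih =>
    rw [descWord_add_one hpq, wordB_cons, ih (by lia), reflB_basisVec (by lia)]

theorem wordB_ascWord_basisVec (hpq : p ≤ q) (hq : q ≤ n) :
    wordB n (ascWord p q) (basisVec q) = basisVec p := by
  induction p, hpq using Int.leInductionDown with
  | base => rw [ascWord_self]; rfl
  | pred p hpq ih =>
    have hp : reflB n (p - 1) (basisVec (p - 1 + 1)) = basisVec (p - 1) :=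
      reflB_basisVec_add_one (by lia)
    rw [ascWord_sub_one hpq, wordB_cons, ih, ← hp, sub_add_cancel]

theorem wordB_descWord_omegaW {k : ℤ} (hk : k < p) (hq : q ≤ n) :
    wordB n (descWord p q) (omegaW k) = omegaW k :=
  wordB_eq_self fun i hi => by
    have := mem_descWord.mp hi
    grind [omegaW]

theorem wordB_descWord_omegaW_self (hp : 1 ≤ p) (hpq : p ≤ q) (hq : q ≤ n) :
    wordB n (descWord p q) (omegaW p) = omegaW (p - 1) + basisVec q := by
  rw [omegaW_eq_add_basisVec hp, map_add, wordB_descWord_omegaW (by lia) hq,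
    wordB_descWord_basisVec hpq hq]

theorem wordB_ascWord_omegaW {k : ℤ} (hk : k < p) (hq : q ≤ n) :
    wordB n (ascWord p q) (omegaW k) = omegaW k :=
  wordB_eq_self fun i hi => by
    have := mem_ascWord.mp hi
    grind [omegaW]

theorem wordB_descWord_basisVec_of_lt {k : ℤ} (hk : q < k) (hq : q ≤ n) :
    wordB n (descWord p q) (basisVec k) = basisVec k :=
  wordB_eq_self fun i hi => by
    have := mem_descWord.mp hi
    simp only [basisVec, Pi.single_apply]
    grind

end Words

section WeylElements

variable {n : ℕ} {r j : ℤ}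

-- In `wrnIdx` and `wrjIdx` the index `t` ranges over `List.range` coerced to `List ℤ`, a coercion
-- that Lean elaborates to a monadic bind; hence `bind_pure_comp` here and below.
theorem wrnIdx_eq_descWord (n : ℕ) (r : ℤ) : wrnIdx n r = descWord r n := by
  simp only [wrnIdx, descWord, bind_pure_comp, List.map_eq_map, List.map_map, Function.comp_def]

theorem wrjIdx_eq_append (n : ℕ) (r j : ℤ) :
    wrjIdx n r j = descWord (r - 1) j ++ ascWord (j + 1) n ++ descWord r (n + 1) := by
  have hdesc : j + 1 - r = j - (r - 1) := by ring
  have hasc : (n : ℤ) - 1 - j = n - (j + 1) := by ring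
  simp only [wrjIdx, descWord, ascWord, bind_pure_comp, List.map_eq_map, List.map_map,
    Function.comp_def, hdesc, hasc, add_sub_cancel_right]

-- For `r = n` the vector `omegaW r` is twice the fundamental weight `ω_n` of type `B_n`.
theorem wordB_wrnIdx_omegaW (hr : 1 ≤ r) (hrn : r ≤ n) :
    wordB n (wrnIdx n r) (omegaW r) = omegaW (r - 1) + alphaB n n := by
  rw [wrnIdx_eq_descWord, wordB_descWord_omegaW_self hr hrn le_rfl, alphaB_last]

theorem wordB_descWord_add_one_omegaW (hr : 1 ≤ r) (hrn : r ≤ n) :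
    wordB n (descWord r (n + 1)) (omegaW r) = omegaW (r - 1) - basisVec n := by
  have hfix : reflB n n (omegaW (r - 1)) = omegaW (r - 1) :=
    reflB_last_eq_self (if_neg (by lia))
  rw [descWord_add_one hrn, wordB_cons, wordB_descWord_omegaW_self hr hrn le_rfl, map_add, hfix,
    reflB_last_basisVec, ← sub_eq_add_neg]

theorem wordB_wrjIdx_omegaW (hr : 2 ≤ r) (hrn : r ≤ n) (hrj : r - 1 ≤ j) (hjn : j < n) :
    wordB n (wrjIdx n r j) (omegaW r) = omegaW (r - 2) + alphaB n j := by
  have hasc : wordB n (ascWord (j + 1) n) (omegaW (r - 1) - basisVec n) =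
      omegaW (r - 1) - basisVec (j + 1) := by
    rw [map_sub, wordB_ascWord_omegaW (by lia) le_rfl, wordB_ascWord_basisVec (by lia) le_rfl]
  have hdesc : wordB n (descWord (r - 1) j) (omegaW (r - 1)) = omegaW (r - 2) + basisVec j := by
    rw [wordB_descWord_omegaW_self (by lia) hrj hjn.le, sub_sub, one_add_one_eq_two]
  calc wordB n (wrjIdx n r j) (omegaW r)
      = wordB n (descWord (r - 1) j) (wordB n (ascWord (j + 1) n)
          (wordB n (descWord r (n + 1)) (omegaW r))) := by
        rw [wrjIdx_eq_append, wordB_append, wordB_append]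
    _ = wordB n (descWord (r - 1) j) (omegaW (r - 1) - basisVec (j + 1)) := by
        rw [wordB_descWord_add_one_omegaW (by lia) hrn, hasc]
    _ = omegaW (r - 2) + basisVec j - basisVec (j + 1) := by
        rw [map_sub, hdesc, wordB_descWord_basisVec_of_lt (by lia) hjn.le]
    _ = omegaW (r - 2) + alphaB n j := by
        rw [alphaB_of_lt hjn, add_sub_assoc]

end WeylElements

/-- type B_n: for `2 ≤ r < n` and `r - 1 ≤ j ≤ n - 1` one has
`w_{r,j}(ω_r) = ω_{r-2} + α_j`; and for `1 ≤ r < n` one has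
`w_{r,n}(ω_r) = ω_{r-1} + α_n`. -/
theorem wrj_omega_B (n : ℕ) (hn : 2 ≤ n) :
    (∀ r j : ℤ, 2 ≤ r → r < (n : ℤ) → r - 1 ≤ j → j ≤ (n : ℤ) - 1 →
      (wrjIdx n r j).foldr (refB n) (omegaW r) = omegaW (r - 2) + alphaB n j) ∧
    (∀ r : ℤ, 1 ≤ r → r < (n : ℤ) →
      (wrnIdx n r).foldr (refB n) (omegaW r) = omegaW (r - 1) + alphaB n (n : ℤ)) := by
  simp only [foldr_refB_eq_wordB]
  exact ⟨fun _ _ hr hrn hrj hjn => wordB_wrjIdx_omegaW hr hrn.le hrj (Int.lt_of_le_sub_one hjn),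
    fun _ hr hrn => wordB_wrnIdx_omegaW hr hrn.le⟩
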